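/- Let n ≥ 3 be an odd integer, ω = e^{2πi/n}, and for t ∈ ℝ let Rot(t) = [[cos t, −sin t],[sin t, cos t]]. Then Σ_{a=1}^{(n−1)/2} Σ_{b=0}^{n−1} ω^{−ab}·( Rot(2πa/n) ⊗ Rot(2πb/n) + Rot(2π(n−a)/n) ⊗ Rot(2π(n−b)/n) ) = n · [[c, 0, 0, −i·s], [0, c, i·s, 0], [0, i·s, c, 0], [−i·s, 0, 0, c]], where c = cos(2π/n), s = sin(2π/n), and ⊗ is the Kronecker product. -/

import Mathlib

open Matrix Complex
open scoped Kronecker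

/-- The 2×2 rotation matrix, viewed as a complex matrix. -/
noncomputable def Rot (t : ℝ) : Matrix (Fin 2) (Fin 2) ℂ :=
  !![(Real.cos t : ℂ), -(Real.sin t : ℂ); (Real.sin t : ℂ), (Real.cos t : ℂ)]

/-!
Replacing `(a, b)` by `(n - a, n - b)` negates both angles. Since `Rot t = cos t • 1 + sin t • J`
with `J = Rot (π / 2)`, the mixed terms `1 ⊗ J` and `J ⊗ 1` cancel, and only
`2 cos α cos β • 1 + 2 sin α sin β • (J ⊗ J)` survives, where `α = 2πa/n` and `β = 2πb/n`.
The sum over `b` then takes the `a`-th Fourier coefficient over `ℤ/n` of `cos β` and of `sin β`.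
These functions only have the frequencies `±1`, and of the two only `1` occurs in the sum over `a`.
-/

open Finset
open scoped Real

theorem Rot_eq_cos_smul_one_add_sin_smul (t : ℝ) :
    Rot t = (Real.cos t : ℂ) • 1 + (Real.sin t : ℂ) • Rot (π / 2) := by
  ext i j
  fin_cases i <;> fin_cases j <;> simp [Rot]

theorem Rot_kronecker_add_Rot_neg_kronecker (x y : ℝ) :
    Rot x ⊗ₖ Rot y + Rot (-x) ⊗ₖ Rot (-y) =
      (2 * (Real.cos x : ℂ) * Real.cos y) • 1 +
        (2 * (Real.sin x : ℂ) * Real.sin y) • (Rot (π / 2) ⊗ₖ Rot (π / 2)) := by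
  rw [Rot_eq_cos_smul_one_add_sin_smul x, Rot_eq_cos_smul_one_add_sin_smul y,
    Rot_eq_cos_smul_one_add_sin_smul (-x), Rot_eq_cos_smul_one_add_sin_smul (-y)]
  simp only [Real.cos_neg, Real.sin_neg, ofReal_neg, add_kronecker, kronecker_add, smul_kronecker,
    kronecker_smul, one_kronecker_one]
  module

theorem Rot_two_pi_mul_sub_div {n a : ℕ} (hn : n ≠ 0) (ha : a ≤ n) :
    Rot (2 * π * (n - a : ℕ) / n) = Rot (-(2 * π * a / n)) := by
  have hangle : 2 * π * (n - a : ℕ) / n = 2 * π - 2 * π * a / n := by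
    rw [Nat.cast_sub ha]
    field_simp
  simp only [Rot, hangle, Real.cos_two_pi_sub, Real.sin_two_pi_sub, Real.cos_neg, Real.sin_neg]

theorem reindex_smul_one_add_smul_Rot_kronecker (c d : ℂ) :
    reindex finProdFinEquiv finProdFinEquiv (c • 1 + d • (Rot (π / 2) ⊗ₖ Rot (π / 2))) =
      !![c, 0, 0, d; 0, c, -d, 0; 0, -d, c, 0; d, 0, 0, c] := by
  ext i j
  fin_cases i <;> fin_cases j <;> simp [Rot, finProdFinEquiv, Fin.divNat, Fin.modNat]

theorem sum_range_zpow_mul_of_isPrimitiveRoot {K : Type*} [Field K] {ζ : K} {n : ℕ}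
    (hζ : IsPrimitiveRoot ζ n) (k : ℤ) :
    ∑ b ∈ range n, ζ ^ (k * b) = if (n : ℤ) ∣ k then (n : K) else 0 := by
  simp only [_root_.zpow_mul, zpow_natCast]
  split_ifs with hk
  · simp [(hζ.zpow_eq_one_iff_dvd k).2 hk]
  · have hne : ζ ^ k ≠ 1 := mt (hζ.zpow_eq_one_iff_dvd k).1 hk
    have hpow : (ζ ^ k) ^ n = 1 := by
      rw [← zpow_natCast, zpow_comm, zpow_natCast, hζ.pow_eq_one, _root_.one_zpow]
    rw [geom_sum_eq hne, hpow, sub_self, zero_div]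

theorem exp_two_pi_mul_div_mul_I (n : ℕ) (b : ℤ) :
    exp ((2 * π * b / n : ℝ) * I) = exp (2 * π * I / n) ^ b := by
  rw [← exp_int_mul]
  congr 1
  push_cast
  ring

theorem cos_two_pi_mul_div (n : ℕ) (b : ℤ) :
    (Real.cos (2 * π * b / n) : ℂ) =
      (exp (2 * π * I / n) ^ b + exp (2 * π * I / n) ^ (-b)) / 2 := by
  rw [← exp_two_pi_mul_div_mul_I, ← exp_two_pi_mul_div_mul_I, ofReal_cos, Complex.cos]
  push_cast
  ring_nf

theorem sin_two_pi_mul_div (n : ℕ) (b : ℤ) :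
    (Real.sin (2 * π * b / n) : ℂ) =
      (exp (2 * π * I / n) ^ (-b) - exp (2 * π * I / n) ^ b) * I / 2 := by
  rw [← exp_two_pi_mul_div_mul_I, ← exp_two_pi_mul_div_mul_I, ofReal_sin, Complex.sin]
  push_cast
  ring_nf

theorem sum_zpow_neg_mul_zpow {n : ℕ} (hn : n ≠ 0) (k j : ℤ) :
    ∑ b ∈ range n, exp (2 * π * I / n) ^ (-(k * b)) * exp (2 * π * I / n) ^ (j * b) =
      if k ≡ j [ZMOD n] then (n : ℂ) else 0 := by
  simp only [Int.modEq_iff_dvd, ← sum_range_zpow_mul_of_isPrimitiveRoot (isPrimitiveRoot_exp n hn),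
    ← zpow_add₀ (exp_ne_zero _)]
  refine sum_congr rfl fun b _ => ?_
  ring_nf

theorem sum_zpow_neg_mul_cos {n : ℕ} (hn : n ≠ 0) (k : ℤ) :
    ∑ b ∈ range n, exp (2 * π * I / n) ^ (-(k * b)) * Real.cos (2 * π * b / n) =
      ((if k ≡ 1 [ZMOD n] then (n : ℂ) else 0) + if k ≡ -1 [ZMOD n] then (n : ℂ) else 0) / 2 := by
  simp only [← sum_zpow_neg_mul_zpow hn, ← sum_add_distrib, sum_div]
  refine sum_congr rfl fun b _ => ?_
  rw [← Int.cast_natCast (R := ℝ) b, cos_two_pi_mul_div]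
  ring_nf

theorem sum_zpow_neg_mul_sin {n : ℕ} (hn : n ≠ 0) (k : ℤ) :
    ∑ b ∈ range n, exp (2 * π * I / n) ^ (-(k * b)) * Real.sin (2 * π * b / n) =
      ((if k ≡ -1 [ZMOD n] then (n : ℂ) else 0) - if k ≡ 1 [ZMOD n] then (n : ℂ) else 0) *
        I / 2 := by
  simp only [← sum_zpow_neg_mul_zpow hn, ← sum_sub_distrib, sum_div, sum_mul]
  refine sum_congr rfl fun b _ => ?_
  rw [← Int.cast_natCast (R := ℝ) b, sin_two_pi_mul_div]
  ring_nf

theorem natCast_modEq_one_iff {n a : ℕ} (hn : 1 < n) (ha : a < n) :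
    (a : ℤ) ≡ 1 [ZMOD n] ↔ a = 1 := by
  rw [Int.ModEq, Int.emod_eq_of_lt (by lia) (by lia), Int.emod_eq_of_lt (by lia) (by lia)]
  lia

theorem not_natCast_modEq_neg_one {n a : ℕ} (ha : a + 1 < n) : ¬ (a : ℤ) ≡ -1 [ZMOD n] := by
  intro h
  have hdvd : (n : ℤ) ∣ a + 1 := by simpa using h.symm.dvd
  have := Int.le_of_dvd (by lia) hdvd
  lia

theorem sum_zpow_smul_Rot_kronecker {n a : ℕ} (ha : a + 1 < n) :
    ∑ b ∈ range n, exp (2 * π * I / n) ^ (-((a : ℤ) * b)) •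
        (Rot (2 * π * a / n) ⊗ₖ Rot (2 * π * b / n) +
          Rot (2 * π * (n - a : ℕ) / n) ⊗ₖ Rot (2 * π * (n - b : ℕ) / n)) =
      if a = 1 then
        (n : ℂ) • ((Real.cos (2 * π / n) : ℂ) • 1 +
          (-I * Real.sin (2 * π / n)) • (Rot (π / 2) ⊗ₖ Rot (π / 2)))
      else 0 := by
  have hn : n ≠ 0 := by lia
  set α := 2 * π * a / n with hα
  set J := Rot (π / 2)
  set ω := exp (2 * π * I / n)
  calc
    _ = ∑ b ∈ range n, ω ^ (-((a : ℤ) * b)) •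
          ((2 * (Real.cos α : ℂ) * Real.cos (2 * π * b / n)) • 1 +
            (2 * (Real.sin α : ℂ) * Real.sin (2 * π * b / n)) • (J ⊗ₖ J)) := by
      refine sum_congr rfl fun b hb => ?_
      rw [Rot_two_pi_mul_sub_div hn (by lia), Rot_two_pi_mul_sub_div hn (mem_range.1 hb).le,
        Rot_kronecker_add_Rot_neg_kronecker]
    _ = (2 * (Real.cos α : ℂ) *
            ∑ b ∈ range n, ω ^ (-((a : ℤ) * b)) * Real.cos (2 * π * b / n)) • 1 +
          (2 * (Real.sin α : ℂ) *
            ∑ b ∈ range n, ω ^ (-((a : ℤ) * b)) * Real.sin (2 * π * b / n)) • (J ⊗ₖ J) := by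
      simp only [mul_sum, sum_smul, ← sum_add_distrib]
      refine sum_congr rfl fun b _ => ?_
      module
    _ = _ := by
      rw [sum_zpow_neg_mul_cos hn, sum_zpow_neg_mul_sin hn, if_neg (not_natCast_modEq_neg_one ha)]
      simp only [natCast_modEq_one_iff (by lia : 1 < n) (by lia : a < n)]
      split_ifs with h
      · subst h
        rw [hα, Nat.cast_one, mul_one]
        module
      · simp

theorem cyclic_fact3_odd_general (n : ℕ) (s : Finset ℕ) (hone : 1 ∈ s)
    (hs : ∀ a ∈ s, a + 1 < n) :
    (∑ a ∈ s, ∑ b ∈ Finset.range n,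
      (Complex.exp (2 * Real.pi * Complex.I / n)) ^ (-((a : ℤ) * (b : ℤ))) •
        ((Matrix.reindex finProdFinEquiv finProdFinEquiv
            (Rot (2 * Real.pi * a / n) ⊗ₖ Rot (2 * Real.pi * b / n)) : Matrix (Fin 4) (Fin 4) ℂ)
         + (Matrix.reindex finProdFinEquiv finProdFinEquiv
            (Rot (2 * Real.pi * (n - a : ℕ) / n) ⊗ₖ Rot (2 * Real.pi * (n - b : ℕ) / n)) :
              Matrix (Fin 4) (Fin 4) ℂ)))
    = (n : ℂ) •
      !![(Real.cos (2 * Real.pi / n) : ℂ), 0, 0, -Complex.I * (Real.sin (2 * Real.pi / n) : ℂ);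
         0, (Real.cos (2 * Real.pi / n) : ℂ), Complex.I * (Real.sin (2 * Real.pi / n) : ℂ), 0;
         0, Complex.I * (Real.sin (2 * Real.pi / n) : ℂ), (Real.cos (2 * Real.pi / n) : ℂ), 0;
         -Complex.I * (Real.sin (2 * Real.pi / n) : ℂ), 0, 0,
           (Real.cos (2 * Real.pi / n) : ℂ)] := by
  simp only [← coe_reindexLinearEquiv ℂ ℂ, ← map_add, ← map_smul, ← map_sum]
  rw [sum_congr rfl fun a ha => sum_zpow_smul_Rot_kronecker (hs a ha), sum_ite_eq' s 1,
    if_pos hone, map_smul, coe_reindexLinearEquiv, reindex_smul_one_add_smul_Rot_kronecker,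
    neg_mul, neg_neg]

/-- Fact 3 of the Appendix: the key computational step for odd n. -/
theorem cyclic_fact3_odd (n : ℕ) (hn : 3 ≤ n) (hodd : Odd n) :
    (∑ a ∈ Finset.Icc 1 ((n - 1) / 2), ∑ b ∈ Finset.range n,
      (Complex.exp (2 * Real.pi * Complex.I / n)) ^ (-((a : ℤ) * (b : ℤ))) •
        ((Matrix.reindex finProdFinEquiv finProdFinEquiv
            (Rot (2 * Real.pi * a / n) ⊗ₖ Rot (2 * Real.pi * b / n)) : Matrix (Fin 4) (Fin 4) ℂ)
         + (Matrix.reindex finProdFinEquiv finProdFinEquiv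
            (Rot (2 * Real.pi * (n - a : ℕ) / n) ⊗ₖ Rot (2 * Real.pi * (n - b : ℕ) / n)) :
              Matrix (Fin 4) (Fin 4) ℂ)))
    = (n : ℂ) •
      !![(Real.cos (2 * Real.pi / n) : ℂ), 0, 0, -Complex.I * (Real.sin (2 * Real.pi / n) : ℂ);
         0, (Real.cos (2 * Real.pi / n) : ℂ), Complex.I * (Real.sin (2 * Real.pi / n) : ℂ), 0;
         0, Complex.I * (Real.sin (2 * Real.pi / n) : ℂ), (Real.cos (2 * Real.pi / n) : ℂ), 0;
         -Complex.I * (Real.sin (2 * Real.pi / n) : ℂ), 0, 0,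
           (Real.cos (2 * Real.pi / n) : ℂ)] :=
  cyclic_fact3_odd_general n _ (mem_Icc.2 (by lia)) fun a ha => by have := mem_Icc.1 ha; lia
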